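/- arXiv:1303.1152 — 2 statements merged into one kernel-verified Lean document; each statement's English description precedes it below -/
import Mathlib

section
/- (Flipping improves the objective) Let x ∈ ℝⁿ with ‖x‖₁ ≤ 1 have at least one strictly negative entry, and let x' ∈ ℝⁿ be the vector of entrywise absolute values, x'_i := |x_i|. Then x' lies in the filled simplex ▲ (it is non-negative with Σ_i x'_i ≤ 1), and x' is a strictly better solution of the Lasso instance (Ã, b̃): ‖Ãx' − b̃‖₂ < ‖Ãx − b̃‖₂. -/
open Matrix BigOperators

/-- Euclidean norm of a vector over a finite index type. -/
noncomputable def l2 {ι : Type*} [Fintype ι] (v : ι → ℝ) : ℝ := Real.sqrt (∑ k, v k ^ 2)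

lemma flip_core {E : Type*} [NormedAddCommGroup E] [InnerProductSpace ℝ E]
    (u P Q : E) (hu : ‖u‖ = 1) (σ D Y t K : ℝ) (hσ : 0 < σ) (hσD : σ < D)
    (hK : K * σ = D ^ 2) (hY : 0 ≤ Y) (ht : 0 < t) (hYt : Y + t ≤ 1)
    (hP : ‖P‖ ≤ D * Y) (hQ : ‖Q‖ ≤ D * t) (huP : σ * Y ≤ inner ℝ u P) :
    ‖(P + Q) + ((1 - (Y + t)) * K) • u‖ < ‖(P - Q) + ((1 - (Y - t)) * K) • u‖ := by
  have hD : 0 < D := hσ.trans hσD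
  have hKD : D < K := by
    by_contra h
    push Not at h
    nlinarith
  have h1 : inner ℝ P Q ≤ (D * Y) * (D * t) :=
    (real_inner_le_norm P Q).trans (mul_le_mul hP hQ (norm_nonneg _) (by positivity))
  have h2 : inner ℝ u Q ≤ D * t := by
    have := real_inner_le_norm u Q
    rw [hu, one_mul] at this
    exact this.trans hQ
  have huu : inner ℝ u u = (1 : ℝ) := by rw [real_inner_self_eq_norm_sq, hu]; norm_num
  apply lt_of_pow_lt_pow_left₀ 2 (norm_nonneg _)
  rw [← real_inner_self_eq_norm_sq, ← real_inner_self_eq_norm_sq]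
  simp only [inner_add_left, inner_add_right, inner_sub_left, inner_sub_right,
    real_inner_smul_left, real_inner_smul_right, huu, real_inner_comm u P, real_inner_comm u Q,
    real_inner_comm P Q]
  rw [real_inner_comm P u, real_inner_comm Q u] at *
  have hK0 : 0 < K := hD.trans hKD
  have e1 : (t * K) * (σ * Y) ≤ (t * K) * inner ℝ P u :=
    mul_le_mul_of_nonneg_left huP (by positivity)
  have e1' : (t * K) * (σ * Y) = (D * Y) * (D * t) := by linear_combination t * Y * hK
  have hY1 : 0 < 1 - Y := by linarith
  have e2 : ((1 - Y) * K) * inner ℝ Q u ≤ ((1 - Y) * K) * (D * t) :=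
    mul_le_mul_of_nonneg_left h2 (by positivity)
  have e3 : ((1 - Y) * K * t) * D < ((1 - Y) * K * t) * K :=
    mul_lt_mul_of_pos_left hKD (by positivity)
  try rw [real_inner_comm P Q] at *
  nlinarith

lemma l2_eq {d : ℕ} (v : Fin d → ℝ) : l2 v = ‖WithLp.toLp 2 v‖ := by
  simp [l2, EuclideanSpace.norm_eq]

/-- Flipping improves the objective: if `x` with `‖x‖₁ ≤ 1` has a strictly negative
entry, then the vector `x'` of entrywise absolute values lies in the filled simplex and
is a strictly better solution of the Lasso instance `(Ã, b̃)`, where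
`b̃ = −(D²/σ)·w/‖w‖₂` and `Ã = A + b̃·1ᵀ`. -/
theorem flipping_improves {d n : ℕ} (hn : 0 < n) (A : Matrix (Fin d) (Fin n) ℝ)
    (σ D : ℝ) (hσ : 0 < σ) (hD : 0 < D)
    (w : Fin d → ℝ) (hw : w ≠ 0)
    (hsep : ∀ i, (Aᵀ i) ⬝ᵥ w / l2 w ≥ σ)
    (hAD : ∀ i, l2 (Aᵀ i) < D)
    (x : Fin n → ℝ) (hx : ∑ i, |x i| ≤ 1) (hneg : ∃ i, x i < 0) :
    let bt : Fin d → ℝ := fun k => -(D ^ 2 / σ) * (w k / l2 w)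
    let Atil : Matrix (Fin d) (Fin n) ℝ := Matrix.of fun k i => A k i + bt k
    let x' : Fin n → ℝ := fun i => |x i|
    (∀ i, 0 ≤ x' i) ∧ (∑ i, x' i ≤ 1) ∧
      l2 (Atil.mulVec x' - bt) < l2 (Atil.mulVec x - bt) := by
  intro bt Atil x'
  refine ⟨fun i => abs_nonneg _, hx, ?_⟩
  obtain ⟨i₀, hi₀⟩ := hneg
  have hw0 : 0 < l2 w := by
    rw [l2_eq, norm_pos_iff]
    intro h
    exact hw (by simpa using h)
  let a : Fin n → EuclideanSpace ℝ (Fin d) := fun i => WithLp.toLp 2 (Aᵀ i)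
  let u : EuclideanSpace ℝ (Fin d) := WithLp.toLp 2 (fun k => w k / l2 w)
  have hu' : u = (l2 w)⁻¹ • WithLp.toLp 2 w := by
    ext k
    simp [u, div_eq_inv_mul]
  have hu : ‖u‖ = 1 := by
    rw [hu', norm_smul, ← l2_eq, Real.norm_of_nonneg (by positivity), inv_mul_cancel₀ hw0.ne']
  have ha : ∀ i, ‖a i‖ < D := fun i => by
    have := hAD i
    rwa [l2_eq] at this
  have hua : ∀ i, σ ≤ inner ℝ u (a i) := fun i => by
    have := hsep i
    rw [hu', real_inner_smul_left, EuclideanSpace.inner_eq_star_dotProduct]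
    simpa [a, div_eq_inv_mul] using this
  have hσD : σ < D := by
    have h := real_inner_le_norm u (a i₀)
    rw [hu, one_mul] at h
    exact ((hua i₀).trans h).trans_lt (ha i₀)
  let y : Fin n → ℝ := fun i => (|x i| + x i) / 2
  let z : Fin n → ℝ := fun i => (|x i| - x i) / 2
  have hy : ∀ i, 0 ≤ y i := fun i => by
    have := neg_abs_le (x i)
    simp only [y]; linarith
  have hz : ∀ i, 0 ≤ z i := fun i => by
    have := le_abs_self (x i)
    simp only [z]; linarith
  have hbound : ∀ c : Fin n → ℝ, (∀ i, 0 ≤ c i) → ‖∑ i, c i • a i‖ ≤ D * ∑ i, c i := by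
    intro c hc
    refine (norm_sum_le _ _).trans ?_
    rw [Finset.mul_sum]
    refine Finset.sum_le_sum fun i _ => ?_
    rw [norm_smul, Real.norm_of_nonneg (hc i), mul_comm]
    exact mul_le_mul_of_nonneg_right (ha i).le (hc i)
  have hzpos : 0 < ∑ i, z i := by
    refine Finset.sum_pos' (fun i _ => hz i) ⟨i₀, Finset.mem_univ _, ?_⟩
    simp only [z, abs_of_neg hi₀]; linarith
  have hxp : ∀ i, y i + z i = |x i| := fun i => by simp only [y, z]; ring
  have hxm : ∀ i, y i - z i = x i := fun i => by simp only [y, z]; ring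
  have hsp : ∑ i, y i + ∑ i, z i = ∑ i, |x i| := by
    rw [← Finset.sum_add_distrib]; exact Finset.sum_congr rfl fun i _ => hxp i
  have hsm : ∑ i, y i - ∑ i, z i = ∑ i, x i := by
    rw [← Finset.sum_sub_distrib]; exact Finset.sum_congr rfl fun i _ => hxm i
  have key := flip_core u (∑ i, y i • a i) (∑ i, z i • a i) hu σ D (∑ i, y i) (∑ i, z i)
    (D ^ 2 / σ) hσ hσD (by field_simp) (Finset.sum_nonneg fun i _ => hy i) hzpos
    (by rw [hsp]; exact hx) (hbound y hy) (hbound z hz) (by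
      rw [inner_sum, Finset.mul_sum]
      refine Finset.sum_le_sum fun i _ => ?_
      rw [real_inner_smul_right, mul_comm]
      exact mul_le_mul_of_nonneg_left (hua i) (hy i))
  have conv : ∀ c : Fin n → ℝ, WithLp.toLp 2 (Atil.mulVec c - bt) =
      ∑ i, c i • a i + ((1 - ∑ i, c i) * (D ^ 2 / σ)) • u := by
    intro c
    ext k
    simp only [Atil, a, u, bt, Matrix.mulVec, dotProduct, Matrix.of_apply, Pi.sub_apply,
      PiLp.add_apply, PiLp.smul_apply, WithLp.ofLp_sum, Finset.sum_apply, smul_eq_mul,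
      Matrix.transpose_apply, add_mul, Finset.sum_add_distrib, ← Finset.mul_sum,
      WithLp.ofLp_smul, Pi.smul_apply]
    simp only [mul_comm (A k _)]
    ring
  rw [l2_eq, l2_eq, conv, conv]
  rw [hsp, hsm, ← Finset.sum_add_distrib, ← Finset.sum_sub_distrib] at key
  simp only [← add_smul, ← sub_smul, hxp, hxm] at key
  exact key
end

section
/- (Duality between the SVM problem and its margin maximization) Suppose there exists a σ₀-weakly-separating vector for A with σ₀ > 0 (i.e. the data is separable). Then min over x in the unit simplex Δ of ‖Ax‖₂ equals sup over x ∈ Δ with Ax ≠ 0 of min_{i∈[1..n]} ⟨A_i, Ax⟩/‖Ax‖₂, and this supremum is attained at any minimizer x* of ‖Ax‖₂ over Δ, for which min_i ⟨A_i, Ax*⟩/‖Ax*‖₂ = ‖Ax*‖₂. -/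
open Matrix BigOperators

lemma l2_sq' {ι : Type*} [Fintype ι] (v : ι → ℝ) : l2 v ^ 2 = v ⬝ᵥ v := by
  unfold l2
  rw [Real.sq_sqrt (Finset.sum_nonneg fun k _ => sq_nonneg _)]
  simp [dotProduct, sq]

lemma l2_nonneg' {ι : Type*} [Fintype ι] (v : ι → ℝ) : 0 ≤ l2 v := Real.sqrt_nonneg _

lemma l2_pos' {ι : Type*} [Fintype ι] {v : ι → ℝ} (hv : v ≠ 0) : 0 < l2 v := by
  refine lt_of_le_of_ne (l2_nonneg' v) fun h => hv ?_
  have := l2_sq' v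
  rw [← h] at this
  exact dotProduct_self_eq_zero.1 (by linarith)

lemma dot_le_l2 {ι : Type*} [Fintype ι] (u v : ι → ℝ) : u ⬝ᵥ v ≤ l2 u * l2 v := by
  unfold l2 dotProduct
  exact Real.sum_mul_le_sqrt_mul_sqrt _ _ _

lemma mulVec_dot {d n : ℕ} (A : Matrix (Fin d) (Fin n) ℝ) (x : Fin n → ℝ) (v : Fin d → ℝ) :
    A.mulVec x ⬝ᵥ v = ∑ i, x i * (Aᵀ i ⬝ᵥ v) := by
  simp only [dotProduct, mulVec, Finset.sum_mul, Finset.mul_sum, transpose_apply]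
  rw [Finset.sum_comm]
  exact Finset.sum_congr rfl fun i _ => Finset.sum_congr rfl fun j _ => by ring

lemma minimizer_dot {d n : ℕ} (A : Matrix (Fin d) (Fin n) ℝ) (xs : Fin n → ℝ)
    (h0 : ∀ i, 0 ≤ xs i) (h1 : ∑ i, xs i = 1)
    (hm : ∀ x : Fin n → ℝ, (∀ i, 0 ≤ x i) → (∑ i, x i = 1) →
        l2 (A.mulVec xs) ≤ l2 (A.mulVec x)) (i : Fin n) :
    A.mulVec xs ⬝ᵥ A.mulVec xs ≤ Aᵀ i ⬝ᵥ A.mulVec xs := by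
  set y := A.mulVec xs with hy
  have key : ∀ t : ℝ, 0 ≤ t → t ≤ 1 →
      0 ≤ 2 * t * (Aᵀ i ⬝ᵥ y - y ⬝ᵥ y) + t ^ 2 * ((Aᵀ i - y) ⬝ᵥ (Aᵀ i - y)) := by
    intro t ht0 ht1
    have h := hm ((1 - t) • xs + t • Pi.single i 1) ?_ ?_
    · have e : A.mulVec ((1 - t) • xs + t • Pi.single i 1) = y + t • (Aᵀ i - y) := by
        rw [mulVec_add, mulVec_smul, mulVec_smul, mulVec_single_one, ← hy]
        ext k
        simp [Matrix.col]
        ring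
      rw [e] at h
      have h2 := pow_le_pow_left₀ (l2_nonneg' _) h 2
      rw [l2_sq', l2_sq'] at h2
      simp only [add_dotProduct, dotProduct_add, smul_dotProduct, dotProduct_smul,
        sub_dotProduct, dotProduct_sub, smul_eq_mul, dotProduct_comm y (Aᵀ i)] at h2 ⊢
      linarith
    · intro j
      have : (0 : ℝ) ≤ Pi.single (M := fun _ : Fin n => ℝ) i 1 j := by
        by_cases hj : j = i
        · subst hj; simp
        · simp [hj]
      simp only [Pi.add_apply, Pi.smul_apply, smul_eq_mul]
      have := h0 j
      have : 0 ≤ 1 - t := by linarith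
      positivity
    · simp [Finset.sum_add_distrib, ← Finset.mul_sum, h1]
  by_contra! hc
  set D := (Aᵀ i - y) ⬝ᵥ (Aᵀ i - y)
  have hD : 0 ≤ D := (sq_nonneg _).trans_eq (l2_sq' (Aᵀ i - y))
  set c := y ⬝ᵥ y - Aᵀ i ⬝ᵥ y with hcd
  have hcp : 0 < c := by linarith
  have hk := key (c / (c + D)) (by positivity) (by rw [div_le_one (by positivity)]; linarith)
  have e : 2 * (c / (c + D)) * (Aᵀ i ⬝ᵥ y - y ⬝ᵥ y) + (c / (c + D)) ^ 2 * D
      = - (c ^ 2 * (2 * c + D) / (c + D) ^ 2) := by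
    rw [show Aᵀ i ⬝ᵥ y - y ⬝ᵥ y = -c by linarith]
    have : c + D ≠ 0 := by positivity
    field_simp
    ring
  rw [e] at hk
  have : 0 < c ^ 2 * (2 * c + D) / (c + D) ^ 2 := by positivity
  linarith

/-- Duality between the SVM problem and its margin maximization: if the data is
separable (there is a σ₀-weakly-separating vector with σ₀ > 0), then
`min_{x ∈ Δ} ‖Ax‖₂ = sup_{x ∈ Δ, Ax ≠ 0} min_i ⟨Aᵢ, Ax⟩/‖Ax‖₂`, and this supremum is
attained at any minimizer `x*` of `‖Ax‖₂` over `Δ`, for which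
`min_i ⟨Aᵢ, Ax*⟩/‖Ax*‖₂ = ‖Ax*‖₂`. -/
theorem svm_margin_duality {d n : ℕ} (hn : 0 < n) (A : Matrix (Fin d) (Fin n) ℝ)
    (hsep : ∃ w : Fin d → ℝ, w ≠ 0 ∧ ∃ σ0 > (0 : ℝ), ∀ i, (Aᵀ i) ⬝ᵥ w / l2 w ≥ σ0) :
    sInf {v : ℝ | ∃ x : Fin n → ℝ, (∀ i, 0 ≤ x i) ∧ (∑ i, x i = 1) ∧
        v = l2 (A.mulVec x)} =
    sSup {v : ℝ | ∃ x : Fin n → ℝ, (∀ i, 0 ≤ x i) ∧ (∑ i, x i = 1) ∧ A.mulVec x ≠ 0 ∧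
        v = ⨅ i : Fin n, (Aᵀ i) ⬝ᵥ A.mulVec x / l2 (A.mulVec x)} ∧
    ∀ xs : Fin n → ℝ, (∀ i, 0 ≤ xs i) → (∑ i, xs i = 1) →
      (∀ x : Fin n → ℝ, (∀ i, 0 ≤ x i) → (∑ i, x i = 1) →
        l2 (A.mulVec xs) ≤ l2 (A.mulVec x)) →
      (⨅ i : Fin n, (Aᵀ i) ⬝ᵥ A.mulVec xs / l2 (A.mulVec xs)) = l2 (A.mulVec xs) := by
  haveI : Nonempty (Fin n) := ⟨⟨0, hn⟩⟩
  have hne : ∀ x : Fin n → ℝ, (∀ i, 0 ≤ x i) → (∑ i, x i = 1) → A.mulVec x ≠ 0 := by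
    obtain ⟨w, hw, σ, hσ, h⟩ := hsep
    intro x h0 h1 hx
    have e := mulVec_dot A x w
    rw [hx, zero_dotProduct] at e
    have hl := l2_pos' hw
    have : ∑ i, x i * (σ * l2 w) ≤ ∑ i, x i * (Aᵀ i ⬝ᵥ w) :=
      Finset.sum_le_sum fun i _ => mul_le_mul_of_nonneg_left
        ((le_div_iff₀ hl).1 (h i)) (h0 i)
    rw [← Finset.sum_mul, h1, ← e] at this
    have : 0 < σ * l2 w := by positivity
    linarith
  -- weak duality
  have weak : ∀ x z : Fin n → ℝ, (∀ i, 0 ≤ x i) → (∑ i, x i = 1) → (∀ i, 0 ≤ z i) →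
      (∑ i, z i = 1) →
      (⨅ i : Fin n, (Aᵀ i) ⬝ᵥ A.mulVec x / l2 (A.mulVec x)) ≤ l2 (A.mulVec z) := by
    intro x z hx0 hx1 hz0 hz1
    have hl := l2_pos' (hne x hx0 hx1)
    set m := ⨅ i : Fin n, (Aᵀ i) ⬝ᵥ A.mulVec x / l2 (A.mulVec x) with hmdef
    have hm : ∀ i, m * l2 (A.mulVec x) ≤ (Aᵀ i) ⬝ᵥ A.mulVec x := fun i =>
      (le_div_iff₀ hl).1 (ciInf_le (Set.finite_range _).bddBelow i)
    have : ∑ i, z i * (m * l2 (A.mulVec x)) ≤ ∑ i, z i * (Aᵀ i ⬝ᵥ A.mulVec x) :=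
      Finset.sum_le_sum fun i _ => mul_le_mul_of_nonneg_left (hm i) (hz0 i)
    rw [← Finset.sum_mul, hz1, one_mul, ← mulVec_dot] at this
    exact le_of_mul_le_mul_right (this.trans (dot_le_l2 _ _)) hl
  have att : ∀ xs : Fin n → ℝ, (∀ i, 0 ≤ xs i) → (∑ i, xs i = 1) →
      (∀ x : Fin n → ℝ, (∀ i, 0 ≤ x i) → (∑ i, x i = 1) →
        l2 (A.mulVec xs) ≤ l2 (A.mulVec x)) →
      (⨅ i : Fin n, (Aᵀ i) ⬝ᵥ A.mulVec xs / l2 (A.mulVec xs)) = l2 (A.mulVec xs) := by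
    intro xs h0 h1 hm
    refine le_antisymm (weak xs xs h0 h1 h0 h1) (le_ciInf fun i => ?_)
    rw [le_div_iff₀ (l2_pos' (hne xs h0 h1)), ← sq, l2_sq']
    exact minimizer_dot A xs h0 h1 hm i
  refine ⟨?_, att⟩
  obtain ⟨xs, hxs, hmin⟩ := (isCompact_stdSimplex ℝ (Fin n)).exists_isMinOn
    ⟨_, single_mem_stdSimplex ℝ (⟨0, hn⟩ : Fin n)⟩
    (f := fun x => l2 (A.mulVec x)) (by unfold l2 mulVec dotProduct; fun_prop)
  have hm : ∀ x : Fin n → ℝ, (∀ i, 0 ≤ x i) → (∑ i, x i = 1) →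
      l2 (A.mulVec xs) ≤ l2 (A.mulVec x) := fun x h0 h1 => hmin ⟨h0, h1⟩
  trans l2 (A.mulVec xs)
  · refine IsLeast.csInf_eq ⟨⟨xs, hxs.1, hxs.2, rfl⟩, ?_⟩
    rintro v ⟨x, h0, h1, rfl⟩
    exact hm x h0 h1
  · symm
    refine IsGreatest.csSup_eq ⟨⟨xs, hxs.1, hxs.2, hne xs hxs.1 hxs.2,
      (att xs hxs.1 hxs.2 hm).symm⟩, ?_⟩
    rintro v ⟨x, h0, h1, _, rfl⟩
    exact weak x xs h0 h1 hxs.1 hxs.2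
end
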